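/- arXiv:1507.07186 — 5 statements merged into one kernel-verified Lean document; each statement's English description precedes it below -/
import Mathlib

section
/- Let A be a C*-algebra and let B be a norm-closed *-subalgebra of A which is a Chebyshev subspace of A. If there exist three nonzero mutually orthogonal elements a, b, c ∈ B, then B = A. -/
/-!
A best approximation `v ∈ B` of an element `z` may be perturbed by any small `g ∈ B` orthogonal to
`z - v`, because orthogonal elements of a C⋆-algebra satisfy `‖x + y‖ = max ‖x‖ ‖y‖`; uniqueness
therefore forces `z = v` as soon as such a `g ≠ 0` exists. If `z` is orthogonal to a nonzero
self-adjoint `h ∈ B`, functional calculus provides `0 ≤ f ≤ 1` and `g ≠ 0` in `C⋆(h)` with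
`f * g = g`. The contraction `x ↦ (1 - f) * x * (1 - f)` preserves `B` and fixes `z`, hence fixes
`v`, so that `g` is orthogonal to `z - v`. Thus `B` contains everything orthogonal to one of its
nonzero self-adjoint elements.

Given orthogonal self-adjoint `a, b, c ∈ B`, let `p` and `q` be the elements `f` associated with `a`
and `b`. Every `x` decomposes as
`(1 - p) * x * (1 - p) + (1 - q) * y * (1 - q) + (q * x * p + p * x * q)`, where
`y = x - (1 - p) * x * (1 - p)`. The first two terms are orthogonal to nonzero elements of `C⋆(a)`
and `C⋆(b)`, and the last one is orthogonal to `c`.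
-/

open scoped CStarAlgebra

section Chebyshev

/-- A Chebyshev set in a metric space: every point has exactly one nearest point in `V`.
For subspaces of normed spaces these are the Chebyshev subspaces. -/
def IsChebyshev {X : Type*} [PseudoMetricSpace X] (V : Set X) : Prop :=
  ∀ x, ∃! v, v ∈ V ∧ dist x v = Metric.infDist x V

namespace IsChebyshev

theorem exists_forall_dist_le_imp_eq {X : Type*} [PseudoMetricSpace X] {V : Set X}
    (hV : IsChebyshev V) (x : X) : ∃ v ∈ V, ∀ w ∈ V, dist x w ≤ dist x v → w = v := by
  obtain ⟨v, ⟨hvV, hv⟩, hunique⟩ := hV x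
  exact ⟨v, hvV, fun w hw hle =>
    hunique w ⟨hw, (hle.trans hv.le).antisymm (Metric.infDist_le_dist_of_mem hw)⟩⟩

theorem isClosed {X : Type*} [MetricSpace X] {V : Set X} (hV : IsChebyshev V) : IsClosed V := by
  refine isClosed_of_closure_subset fun x hx => ?_
  obtain ⟨v, ⟨hvV, hv⟩, -⟩ := hV x
  rw [Metric.infDist_zero_of_mem_closure hx] at hv
  rwa [dist_eq_zero.mp hv]

end IsChebyshev

end Chebyshev

section ComplCorner

variable {R : Type*} [NonUnitalRing R]

/-- The map `x ↦ (1 - f) * x * (1 - f)`, expanded so as to make sense without a unit. For a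
projection `f` it is the compression to the corner complementary to that of `f`. -/
def complCorner (f : R) : R →+ R where
  toFun x := x - f * x - x * f + f * x * f
  map_zero' := by simp
  map_add' x y := by noncomm_ring

theorem complCorner_apply (f x : R) : complCorner f x = x - f * x - x * f + f * x * f := rfl

theorem complCorner_eq_self {f x : R} (hfx : f * x = 0) (hxf : x * f = 0) :
    complCorner f x = x := by
  simp [complCorner_apply, hfx, hxf]

theorem mul_complCorner_eq_zero {f g : R} (hgf : g * f = g) (x : R) :
    g * complCorner f x = 0 := by
  simp [complCorner_apply, mul_add, mul_sub, ← mul_assoc, hgf]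

theorem complCorner_mul_eq_zero {f g : R} (hfg : f * g = g) (x : R) :
    complCorner f x * g = 0 := by
  simp [complCorner_apply, add_mul, sub_mul, mul_assoc, hfg]

theorem complCorner_mem {S : Type*} [SetLike S R] [NonUnitalSubringClass S R] {s : S} {f x : R}
    (hf : f ∈ s) (hx : x ∈ s) : complCorner f x ∈ s :=
  add_mem (sub_mem (sub_mem hx (mul_mem hf hx)) (mul_mem hx hf)) (mul_mem (mul_mem hf hx) hf)

theorem eq_complCorner_add_complCorner_add {p q : R} (hpq : p * q = 0) (hqp : q * p = 0) (x : R) :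
    x = complCorner p x + complCorner q (x - complCorner p x) + (q * x * p + p * x * q) := by
  have hqp' (y : R) : q * (p * y) = 0 := by rw [← mul_assoc, hqp, zero_mul]
  simp only [complCorner_apply, mul_add, mul_sub, add_mul, sub_mul, mul_assoc, hpq, hqp', mul_zero]
  abel

end ComplCorner

section CFC

open scoped NonUnitalContinuousFunctionalCalculus

theorem cfcₙ_mul_eq_zero {𝕜 A : Type*} {P : A → Prop} [RCLike 𝕜] [NonUnitalRing A] [StarRing A]
    [Module 𝕜 A] [IsScalarTower 𝕜 A A] [SMulCommClass 𝕜 A A] [TopologicalSpace A]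
    [NonUnitalContinuousFunctionalCalculus 𝕜 A P] [IsTopologicalRing A] [T2Space A] {a z : A}
    (h : a * z = 0) (h_star : star a * z = 0) (φ : 𝕜 → 𝕜) : cfcₙ φ a * z = 0 :=
  cfcₙ_cases (· * z = 0) a φ (zero_mul z) fun hφ hφ₀ ha =>
    ContinuousMapZero.nonUnitalStarAlgHom_apply_mul_eq_zero (cfcₙHom ha) z
      (by rwa [cfcₙHom_id]) (by rwa [map_star, cfcₙHom_id]) (cfcₙHom_continuous ha)
      ⟨⟨_, hφ.domRestrict⟩, hφ₀⟩

theorem mul_cfcₙ_eq_zero {𝕜 A : Type*} {P : A → Prop} [RCLike 𝕜] [NonUnitalRing A] [StarRing A]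
    [Module 𝕜 A] [IsScalarTower 𝕜 A A] [SMulCommClass 𝕜 A A] [TopologicalSpace A]
    [NonUnitalContinuousFunctionalCalculus 𝕜 A P] [IsTopologicalRing A] [T2Space A] {a z : A}
    (h : z * a = 0) (h_star : z * star a = 0) (φ : 𝕜 → 𝕜) : z * cfcₙ φ a = 0 :=
  cfcₙ_cases (z * · = 0) a φ (mul_zero z) fun hφ hφ₀ ha =>
    ContinuousMapZero.mul_nonUnitalStarAlgHom_apply_eq_zero (cfcₙHom ha) z
      (by rwa [cfcₙHom_id]) (by rwa [map_star, cfcₙHom_id]) (cfcₙHom_continuous ha)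
      ⟨⟨_, hφ.domRestrict⟩, hφ₀⟩

end CFC

section Cutoff

/-- The even cutoff function equal to `1` outside `(-δ, δ)` and vanishing at `0`. In the functional
calculus it gives a local unit for `excess δ`. -/
noncomputable def plateau (δ t : ℝ) : ℝ := min 1 (|t| / δ)

/-- The distance from `t` to `[-δ, δ]`, used to cut off the part of the spectrum where
`plateau δ` is not `1`. -/
def excess (δ t : ℝ) : ℝ := max 0 (|t| - δ)

variable {δ : ℝ}

@[fun_prop]
theorem continuous_plateau : Continuous (plateau δ) := by
  unfold plateau; fun_prop

@[fun_prop]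
theorem continuous_excess : Continuous (excess δ) := by
  unfold excess; fun_prop

theorem plateau_zero : plateau δ 0 = 0 := by simp [plateau]

theorem excess_zero (hδ : 0 ≤ δ) : excess δ 0 = 0 := by simp [excess, hδ]

theorem norm_one_sub_plateau_le (hδ : 0 ≤ δ) (t : ℝ) : ‖1 - plateau δ t‖ ≤ 1 := by
  have h_nonneg : 0 ≤ plateau δ t := le_min zero_le_one (by positivity)
  have h_le : plateau δ t ≤ 1 := min_le_left _ _
  rw [Real.norm_of_nonneg (by linarith)]
  linarith

theorem plateau_mul_excess (hδ : 0 < δ) (t : ℝ) : plateau δ t * excess δ t = excess δ t := by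
  rcases le_total |t| δ with ht | ht
  · rw [excess, max_eq_left (sub_nonpos.mpr ht), mul_zero]
  · rw [plateau, min_eq_left ((one_le_div hδ).mpr ht), one_mul]

end Cutoff

section CStarAlgebra

variable {A : Type*} [NonUnitalCStarAlgebra A]

theorem star_mul_self_mul_star_mul_self_eq_zero {R : Type*} [NonUnitalSemiring R] [Star R]
    {x y : R} (h : x * star y = 0) : star x * x * (star y * y) = 0 := by
  rw [mul_assoc, ← mul_assoc x, h, zero_mul, mul_zero]

theorem norm_add_eq_max_of_orthogonal {x y : A} (h₁ : x * star y = 0) (h₂ : star y * x = 0) :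
    ‖x + y‖ = max ‖x‖ ‖y‖ := by
  have h₂' : star x * y = 0 := by simpa using congrArg star h₂
  have h_expand : star (x + y) * (x + y) = star x * x + star y * y := by
    simp only [star_add, add_mul, mul_add, h₂, h₂', add_zero, zero_add]
  have h_sq : ‖x + y‖ ^ 2 = max ‖x‖ ‖y‖ ^ 2 := by
    rw [pow_left_monotoneOn.map_max (norm_nonneg x) (norm_nonneg y)]
    simp only [sq, ← CStarRing.norm_star_mul_self, h_expand,
      (IsSelfAdjoint.star_mul_self x).norm_add_eq_max (.star_mul_self y)
        (star_mul_self_mul_star_mul_self_eq_zero h₁)]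
  exact (pow_left_inj₀ (norm_nonneg _) (by positivity) two_ne_zero).mp h_sq

theorem norm_complCorner_le {f : A} (hf : ‖(1 : A⁺¹) - f‖ ≤ 1) (x : A) :
    ‖complCorner f x‖ ≤ ‖x‖ := by
  have h_inr : (complCorner f x : A⁺¹) = (1 - f) * x * (1 - f) := by
    simp only [complCorner_apply, Unitization.inr_sub, Unitization.inr_add, Unitization.inr_mul]
    noncomm_ring
  calc ‖complCorner f x‖ = ‖(1 - f : A⁺¹) * x * (1 - f)‖ := by
        rw [← h_inr, Unitization.norm_inr]
    _ ≤ ‖(1 - f : A⁺¹)‖ * ‖(x : A⁺¹)‖ * ‖(1 - f : A⁺¹)‖ := norm_mul₃_le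
    _ ≤ 1 * ‖(x : A⁺¹)‖ * 1 := by gcongr
    _ = ‖x‖ := by rw [one_mul, mul_one, Unitization.norm_inr]

theorem norm_one_sub_cfcₙ_le {h : A} (hh : IsSelfAdjoint h) {φ : ℝ → ℝ} (hφ : Continuous φ)
    (hφ₀ : φ 0 = 0) (hφ₁ : ∀ t, ‖1 - φ t‖ ≤ 1) : ‖(1 : A⁺¹) - (cfcₙ φ h : A)‖ ≤ 1 := by
  have hh' : IsSelfAdjoint (h : A⁺¹) := Unitization.isSelfAdjoint_inr.mpr hh
  have h_cfc : (1 : A⁺¹) - (cfcₙ φ h : A) = cfc (fun t => 1 - φ t) (h : A⁺¹) := by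
    rw [Unitization.real_cfcₙ_eq_cfc_inr h φ hφ₀, cfc_sub (fun _ => 1) φ (h : A⁺¹)
      continuousOn_const hφ.continuousOn, cfc_const_one ℝ (h : A⁺¹)]
  rw [h_cfc]
  exact norm_cfc_le zero_le_one fun t _ => hφ₁ t

theorem cfcₙ_excess_ne_zero {h : A} (hh : IsSelfAdjoint h) {δ : ℝ} (hδ : 0 ≤ δ) (hδh : δ < ‖h‖) :
    cfcₙ (excess δ) h ≠ 0 := by
  intro h_zero
  refine hδh.not_ge ?_
  rw [← cfcₙ_id' ℝ h]
  refine norm_cfcₙ_le fun t ht => ?_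
  have h_le : ‖excess δ t‖ ≤ 0 := by
    simpa only [h_zero, norm_zero] using
      norm_apply_le_norm_cfcₙ (excess δ) h ht continuous_excess.continuousOn (excess_zero hδ) hh
  rw [norm_le_zero_iff, excess, max_eq_left_iff, sub_nonpos] at h_le
  exact h_le

theorem cfcₙ_plateau_mul_cfcₙ_excess (h : A) {δ : ℝ} (hδ : 0 < δ) :
    cfcₙ (plateau δ) h * cfcₙ (excess δ) h = cfcₙ (excess δ) h := by
  rw [← cfcₙ_mul (plateau δ) (excess δ) h continuous_plateau.continuousOn plateau_zero
    continuous_excess.continuousOn (excess_zero hδ.le)]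
  exact cfcₙ_congr fun t _ => plateau_mul_excess hδ t

variable {B : NonUnitalStarSubalgebra ℂ A}

theorem eq_of_unique_nearest_of_orthogonal {z v g : A} (hv : v ∈ B)
    (h_unique : ∀ w ∈ B, dist z w ≤ dist z v → w = v) (hg : g ∈ B) (hg₀ : g ≠ 0)
    (h₁ : (z - v) * star g = 0) (h₂ : star g * (z - v) = 0) : z = v := by
  set t : ℝ := ‖z - v‖ / ‖g‖
  have h_norm : ‖(t : ℂ) • g‖ = ‖z - v‖ := by
    rw [norm_smul, Complex.norm_real, Real.norm_of_nonneg (by positivity),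
      div_mul_cancel₀ _ (norm_ne_zero_iff.mpr hg₀)]
  have h_eq : v - (t : ℂ) • g = v := by
    refine h_unique _ (sub_mem hv (SMulMemClass.smul_mem _ hg)) ?_
    calc dist z (v - (t : ℂ) • g) = ‖z - v + (t : ℂ) • g‖ := by
          rw [dist_eq_norm, sub_sub_eq_add_sub, add_sub_right_comm]
      _ = max ‖z - v‖ ‖(t : ℂ) • g‖ := norm_add_eq_max_of_orthogonal
          (by rw [star_smul, mul_smul_comm, h₁, smul_zero])
          (by rw [star_smul, smul_mul_assoc, h₂, smul_zero])
      _ ≤ dist z v := by rw [h_norm, max_self, dist_eq_norm]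
  have h_tg : (t : ℂ) • g = 0 := sub_eq_self.mp h_eq
  rwa [h_tg, norm_zero, eq_comm, norm_sub_eq_zero_iff] at h_norm

namespace IsChebyshev

theorem mem_of_mul_eq_self (hB : IsChebyshev (B : Set A)) {f g z : A} (hfB : f ∈ B) (hgB : g ∈ B)
    (hf : IsSelfAdjoint f) (hg : IsSelfAdjoint g) (hg₀ : g ≠ 0) (hfg : f * g = g)
    (hf₁ : ‖(1 : A⁺¹) - f‖ ≤ 1) (hfz : f * z = 0) (hzf : z * f = 0) : z ∈ B := by
  have hgf : g * f = g := by simpa only [star_mul, hf.star_eq, hg.star_eq] using congrArg star hfg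
  obtain ⟨v, hvB, h_unique⟩ := hB.exists_forall_dist_le_imp_eq z
  have hz : complCorner f z = z := complCorner_eq_self hfz hzf
  have hv : complCorner f v = v := by
    refine h_unique _ (complCorner_mem hfB hvB) ?_
    calc dist z (complCorner f v) = ‖complCorner f (z - v)‖ := by rw [map_sub, hz, dist_eq_norm]
      _ ≤ dist z v := (norm_complCorner_le hf₁ _).trans_eq (dist_eq_norm z v).symm
  have hd : complCorner f (z - v) = z - v := by rw [map_sub, hz, hv]
  have h_eq : z = v := by
    refine eq_of_unique_nearest_of_orthogonal hvB h_unique hgB hg₀ ?_ ?_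
    · rw [hg.star_eq, ← hd, complCorner_mul_eq_zero hfg]
    · rw [hg.star_eq, ← hd, mul_complCorner_eq_zero hgf]
  rwa [h_eq]

theorem cfcₙ_mem (hB : IsChebyshev (B : Set A)) {h : A} (hhB : h ∈ B) (φ : ℝ → ℝ) :
    cfcₙ φ h ∈ B :=
  _root_.cfcₙ_mem (𝕜' := ℂ) (hs := hB.isClosed) φ hhB

theorem mem_of_mul_eq_zero (hB : IsChebyshev (B : Set A)) {h z : A} (hhB : h ∈ B)
    (hh : IsSelfAdjoint h) (hh₀ : h ≠ 0) (hhz : h * z = 0) (hzh : z * h = 0) : z ∈ B := by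
  have h_norm : 0 < ‖h‖ := norm_pos_iff.mpr hh₀
  have hδ : 0 < ‖h‖ / 2 := half_pos h_norm
  exact hB.mem_of_mul_eq_self (hB.cfcₙ_mem hhB (plateau (‖h‖ / 2)))
    (hB.cfcₙ_mem hhB (excess (‖h‖ / 2))) (cfcₙ_predicate _ h) (cfcₙ_predicate _ h)
    (cfcₙ_excess_ne_zero hh hδ.le (half_lt_self h_norm)) (cfcₙ_plateau_mul_cfcₙ_excess h hδ)
    (norm_one_sub_cfcₙ_le hh continuous_plateau plateau_zero (norm_one_sub_plateau_le hδ.le))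
    (cfcₙ_mul_eq_zero hhz (by rwa [hh.star_eq]) _) (mul_cfcₙ_eq_zero hzh (by rwa [hh.star_eq]) _)

theorem complCorner_cfcₙ_plateau_mem (hB : IsChebyshev (B : Set A)) {h : A} (hhB : h ∈ B)
    (hh : IsSelfAdjoint h) {δ : ℝ} (hδ : 0 < δ) (hδh : δ < ‖h‖) (x : A) :
    complCorner (cfcₙ (plateau δ) h) x ∈ B := by
  have hfg := cfcₙ_plateau_mul_cfcₙ_excess h hδ
  have hgf : cfcₙ (excess δ) h * cfcₙ (plateau δ) h = cfcₙ (excess δ) h := by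
    rw [← cfcₙ_commute_cfcₙ, hfg]
  exact hB.mem_of_mul_eq_zero (hB.cfcₙ_mem hhB (excess δ)) (cfcₙ_predicate _ h)
    (cfcₙ_excess_ne_zero hh hδ.le hδh) (mul_complCorner_eq_zero hgf x)
    (complCorner_mul_eq_zero hfg x)

theorem eq_top_of_isSelfAdjoint (hB : IsChebyshev (B : Set A)) {a b c : A}
    (ha : a ∈ B) (hb : b ∈ B) (hc : c ∈ B)
    (ha_sa : IsSelfAdjoint a) (hb_sa : IsSelfAdjoint b) (hc_sa : IsSelfAdjoint c)
    (ha₀ : a ≠ 0) (hb₀ : b ≠ 0) (hc₀ : c ≠ 0)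
    (hab : a * b = 0) (hac : a * c = 0) (hbc : b * c = 0) : B = ⊤ := by
  have cfcₙ_annihilates {h z : A} (hh : IsSelfAdjoint h) (hhz : h * z = 0) (φ : ℝ → ℝ) :
      cfcₙ φ h * z = 0 := cfcₙ_mul_eq_zero hhz (by rwa [hh.star_eq]) φ
  have mul_swap {y z : A} (hy : IsSelfAdjoint y) (hz : IsSelfAdjoint z) (hyz : y * z = 0) :
      z * y = 0 := (hy.commute_of_mul_eq_zero hz hyz).eq ▸ hyz
  set p : A := cfcₙ (plateau (‖a‖ / 2)) a
  set q : A := cfcₙ (plateau (‖b‖ / 2)) b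
  have hp : IsSelfAdjoint p := cfcₙ_predicate _ a
  have hq : IsSelfAdjoint q := cfcₙ_predicate _ b
  have hqa : q * a = 0 := cfcₙ_annihilates hb_sa (mul_swap ha_sa hb_sa hab) _
  have hpq : p * q = 0 := cfcₙ_annihilates ha_sa (mul_swap hq ha_sa hqa) _
  have hpc : p * c = 0 := cfcₙ_annihilates ha_sa hac _
  have hqc : q * c = 0 := cfcₙ_annihilates hb_sa hbc _
  have hp_mem (x : A) : complCorner p x ∈ B :=
    hB.complCorner_cfcₙ_plateau_mem ha ha_sa (half_pos (norm_pos_iff.mpr ha₀))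
      (half_lt_self (norm_pos_iff.mpr ha₀)) x
  have hq_mem (x : A) : complCorner q x ∈ B :=
    hB.complCorner_cfcₙ_plateau_mem hb hb_sa (half_pos (norm_pos_iff.mpr hb₀))
      (half_lt_self (norm_pos_iff.mpr hb₀)) x
  have h_cross_mem (x : A) : q * x * p + p * x * q ∈ B := by
    refine hB.mem_of_mul_eq_zero hc hc_sa hc₀ ?_ ?_
    · simp only [mul_add, ← mul_assoc, mul_swap hq hc_sa hqc, mul_swap hp hc_sa hpc, zero_mul,
        add_zero]
    · simp only [add_mul, mul_assoc, hpc, hqc, mul_zero, add_zero]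
  refine eq_top_iff.mpr fun x _ => ?_
  rw [eq_complCorner_add_complCorner_add hpq (mul_swap hp hq hpq) x]
  exact add_mem (add_mem (hp_mem _) (hq_mem _)) (h_cross_mem x)

end IsChebyshev

theorem cebysev_subalgebra_rank_three_eq_general (hB : IsChebyshev (B : Set A)) {a b c : A}
    (ha : a ∈ B) (hb : b ∈ B) (hc : c ∈ B) (ha₀ : a ≠ 0) (hb₀ : b ≠ 0) (hc₀ : c ≠ 0)
    (hab : a * star b = 0) (hac : a * star c = 0) (hbc : b * star c = 0) : B = ⊤ :=
  have star_mul_self_mem {x : A} (hx : x ∈ B) : star x * x ∈ B := mul_mem (star_mem hx) hx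
  have star_mul_self_ne_zero {x : A} (hx : x ≠ 0) : star x * x ≠ 0 :=
    (CStarRing.star_mul_self_ne_zero_iff x).mpr hx
  hB.eq_top_of_isSelfAdjoint
    (star_mul_self_mem ha) (star_mul_self_mem hb) (star_mul_self_mem hc)
    (.star_mul_self a) (.star_mul_self b) (.star_mul_self c)
    (star_mul_self_ne_zero ha₀) (star_mul_self_ne_zero hb₀) (star_mul_self_ne_zero hc₀)
    (star_mul_self_mul_star_mul_self_eq_zero hab) (star_mul_self_mul_star_mul_self_eq_zero hac)
    (star_mul_self_mul_star_mul_self_eq_zero hbc)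

end CStarAlgebra

/-- Let `A` be a C*-algebra and `B` a norm-closed *-subalgebra of `A`
which is a Chebyshev subspace of `A`. If there exist three nonzero mutually
orthogonal elements `a, b, c ∈ B`, then `B = A`. -/
theorem cebysev_subalgebra_rank_three_eq
    {A : Type*} [NonUnitalNormedRing A] [StarRing A] [CStarRing A]
    [NormedSpace ℂ A] [IsScalarTower ℂ A A] [SMulCommClass ℂ A A]
    [StarModule ℂ A] [CompleteSpace A]
    (B : NonUnitalStarSubalgebra ℂ A) (hBclosed : IsClosed (B : Set A))
    (hCheb : ∀ x : A, ∃! v : A, v ∈ B ∧ ‖x - v‖ = Metric.infDist x (B : Set A))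
    (a b c : A) (ha : a ∈ B) (hb : b ∈ B) (hc : c ∈ B)
    (ha0 : a ≠ 0) (hb0 : b ≠ 0) (hc0 : c ≠ 0)
    (hab : a * star b = 0 ∧ star b * a = 0)
    (hac : a * star c = 0 ∧ star c * a = 0)
    (hbc : b * star c = 0 ∧ star c * b = 0) :
    B = ⊤ := by
  let : NonUnitalCStarAlgebra A := {}
  have hB : IsChebyshev (B : Set A) := fun x => by
    simpa only [dist_eq_norm, SetLike.mem_coe] using hCheb x
  exact cebysev_subalgebra_rank_three_eq_general hB ha hb hc ha0 hb0 hc0 hab.1 hac.1 hbc.1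
end

section
/- Let A be a C*-algebra, let F be a JB*-subtriple of A which is a Chebyshev subspace of A, and let e be a nonzero tripotent in F. If F₀(e) ≠ {0}, then A₂(e) = F₂(e), i.e., {x ∈ A : e e* x = x = x e* e} ⊆ F. -/
/-! Let `P x = e e* x e* e` be the contractive projection onto the Peirce-2 space of `e`. It maps
`F` into itself, so if `P x = x` and `v` is the point of `F` nearest to `x`, then `P v` is at
least as near, and uniqueness gives `P v = v`. Hence `u = x - v` lies in the Peirce-2 space and is
orthogonal to every `y` in the Peirce-0 space, which forces `‖u - c • y‖ = max ‖u‖ ‖c • y‖`. If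
`0 ≠ y ∈ F` and `c` is scaled so that `‖c • y‖ = ‖u‖`, then `v + c • y` is again a nearest point,
so `c • y = 0`, that is, `u = 0`. -/

open Function Set

section Chebyshev

/-- A Chebyshev set: every point of the space has exactly one nearest point in `s`. -/
def IsChebyshevSet {X : Type*} [PseudoMetricSpace X] (s : Set X) : Prop :=
  ∀ x, ∃! v, v ∈ s ∧ dist x v = Metric.infDist x s

namespace IsChebyshevSet

section Metric

variable {X : Type*} [PseudoMetricSpace X] {s : Set X} {x v w : X}

theorem eq_of_dist_le (hs : IsChebyshevSet s) (hv : v ∈ s) (hxv : dist x v = Metric.infDist x s)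
    (hw : w ∈ s) (hle : dist x w ≤ dist x v) : w = v :=
  (hs x).unique ⟨hw, (hle.trans_eq hxv).antisymm (Metric.infDist_le_dist_of_mem hw)⟩ ⟨hv, hxv⟩

theorem exists_isFixedPt_dist_eq_infDist (hs : IsChebyshevSet s) {f : X → X}
    (hf : LipschitzWith 1 f) (hfs : MapsTo f s s) (hx : IsFixedPt f x) :
    ∃ v ∈ s, IsFixedPt f v ∧ dist x v = Metric.infDist x s := by
  obtain ⟨v, ⟨hv, hxv⟩, -⟩ := hs x
  have hle : dist x (f v) ≤ dist x v := by simpa [hx.eq] using hf.dist_le_mul x v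
  exact ⟨v, hv, hs.eq_of_dist_le hv hxv (hfs hv) hle, hxv⟩

end Metric

theorem eq_of_norm_sub_smul_le_max {E : Type*} [NormedAddCommGroup E] [NormedSpace ℝ E]
    {F : Submodule ℝ E} (hF : IsChebyshevSet (F : Set E)) {x v y : E} (hv : v ∈ F)
    (hxv : dist x v = Metric.infDist x (F : Set E)) (hy : y ∈ F) (hy0 : y ≠ 0)
    (hmax : ∀ c : ℝ, ‖x - v - c • y‖ ≤ max ‖x - v‖ ‖c • y‖) : x = v := by
  set c : ℝ := ‖x - v‖ / ‖y‖
  have hcy : ‖c • y‖ = ‖x - v‖ := by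
    rw [norm_smul, Real.norm_of_nonneg (by positivity),
      div_mul_cancel₀ _ (norm_ne_zero_iff.mpr hy0)]
  have hle : dist x (v + c • y) ≤ dist x v := by
    simpa only [dist_eq_norm, sub_sub, hcy, max_self] using hmax c
  have hcy0 : c • y = 0 :=
    add_eq_left.mp (hF.eq_of_dist_le hv hxv (F.add_mem hv (F.smul_mem c hy)) hle)
  rw [← sub_eq_zero, ← norm_eq_zero, ← hcy, hcy0, norm_zero]

end IsChebyshevSet

end Chebyshev

section Orthogonality

/-- Orthogonality `a ⊥ b` of two elements of a C⋆-algebra viewed as a JB⋆-triple. -/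
structure TripleOrthogonal {A : Type*} [Mul A] [Zero A] [Star A] (a b : A) : Prop where
  star_mul_eq_zero : star a * b = 0
  mul_star_eq_zero : a * star b = 0

namespace TripleOrthogonal

theorem smul_right {R A : Type*} [Star R] [Mul A] [Zero A] [Star A] [SMulZeroClass R A]
    [SMulCommClass R A A] [StarModule R A] {a b : A} (h : TripleOrthogonal a b) (c : R) :
    TripleOrthogonal a (c • b) where
  star_mul_eq_zero := by rw [mul_smul_comm, h.star_mul_eq_zero, smul_zero]
  mul_star_eq_zero := by rw [star_smul, mul_smul_comm, h.mul_star_eq_zero, smul_zero]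

theorem star_sub_mul_sub {A : Type*} [NonUnitalNonAssocRing A] [StarRing A] {a b : A}
    (h : TripleOrthogonal a b) : star (a - b) * (a - b) = star a * a + star b * b := by
  have hba : star b * a = 0 := by simpa using congr(star $(h.star_mul_eq_zero))
  simp [sub_mul, mul_sub, h.star_mul_eq_zero, hba]

theorem norm_sub_eq_max {A : Type*} [NonUnitalCStarAlgebra A] {a b : A}
    (h : TripleOrthogonal a b) : ‖a - b‖ = max ‖a‖ ‖b‖ := by
  have hmul : star a * a * (star b * b) = 0 := by
    rw [mul_assoc, ← mul_assoc a, h.mul_star_eq_zero, zero_mul, mul_zero]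
  have hsq : ‖a - b‖ ^ 2 = max (‖a‖ ^ 2) (‖b‖ ^ 2) := by
    simpa only [← h.star_sub_mul_sub, CStarRing.norm_star_mul_self, ← sq] using
      (IsSelfAdjoint.star_mul_self a).norm_add_eq_max (.star_mul_self b) hmul
  rwa [← pow_left_monotoneOn.map_max (norm_nonneg a) (norm_nonneg b),
    pow_left_inj₀ (norm_nonneg _) (by positivity) two_ne_zero] at hsq

end TripleOrthogonal

end Orthogonality

section Peirce

/-- A tripotent of a C⋆-algebra viewed as a JB⋆-triple, that is, a partial isometry. -/
def IsTripotent {A : Type*} [Mul A] [Star A] (e : A) : Prop :=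
  e * star e * e = e

namespace IsTripotent

variable {A : Type*} [Semigroup A] [StarMul A] {e : A}

theorem isStarProjection_mul_star_self (he : IsTripotent e) :
    IsStarProjection (e * star e) :=
  ⟨by rw [IsIdempotentElem, ← mul_assoc, he], .mul_star_self e⟩

protected theorem star (he : IsTripotent e) : IsTripotent (star e) := by
  simpa [IsTripotent, mul_assoc] using congr(star $he)

end IsTripotent

/-- The map `x ↦ e e* x e* e`, defined for every `e`; for a tripotent `e` it is the Peirce-2
projection. -/
def peirceTwoProj {A : Type*} [NonUnitalNonAssocSemiring A] [Star A] (e : A) : A →+ A :=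
  (AddMonoidHom.mulLeft (e * star e)).comp (AddMonoidHom.mulRight (star e * e))

section Algebraic

variable {A : Type*} [NonUnitalSemiring A] [StarRing A] {e x y : A}

theorem peirceTwoProj_apply (e x : A) :
    peirceTwoProj e x = e * star e * (x * (star e * e)) := rfl

theorem isFixedPt_peirceTwoProj (h₁ : e * star e * x = x) (h₂ : x * star e * e = x) :
    IsFixedPt (peirceTwoProj e) x := by
  rw [IsFixedPt, peirceTwoProj_apply, ← mul_assoc x, h₂, h₁]

theorem mapsTo_peirceTwoProj {s : Set A} (h : MapsTo (fun z ↦ e * star z * e) s s) :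
    MapsTo (peirceTwoProj e) s s := by
  intro z hz
  simpa [peirceTwoProj_apply, mul_assoc] using h (h hz)

theorem tripleOrthogonal_of_isFixedPt_peirceTwoProj (hx : IsFixedPt (peirceTwoProj e) x)
    (hy₁ : e * star e * y = 0) (hy₂ : y * star e * e = 0) : TripleOrthogonal x y where
  star_mul_eq_zero := by
    have hpx : star x = star (x * (star e * e)) * (e * star e) := by
      simpa [peirceTwoProj_apply] using congr(star $hx.eq.symm)
    rw [hpx, mul_assoc, hy₁, mul_zero]
  mul_star_eq_zero := by
    have hy₂' : star e * e * star y = 0 := by simpa [mul_assoc] using congr(star $hy₂)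
    rw [← hx.eq, peirceTwoProj_apply, mul_assoc, mul_assoc x, hy₂', mul_zero, mul_zero]

end Algebraic

theorem IsTripotent.lipschitzWith_peirceTwoProj {A : Type*} [NonUnitalNormedRing A] [StarRing A]
    [CStarRing A] {e : A} (he : IsTripotent e) : LipschitzWith 1 (peirceTwoProj e) := by
  have hl : ‖e * star e‖ ≤ 1 := IsStarProjection.norm_le _ he.isStarProjection_mul_star_self
  have hr : ‖star e * e‖ ≤ 1 := by
    simpa using IsStarProjection.norm_le _ he.star.isStarProjection_mul_star_self
  refine AddMonoidHomClass.lipschitz_of_bound_nnnorm (peirceTwoProj e) 1 fun x ↦ ?_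
  calc ‖e * star e * (x * (star e * e))‖ ≤ 1 * (‖x‖ * 1) :=
        norm_mul_le_of_le hl (norm_mul_le_of_le le_rfl hr)
    _ = 1 * ‖x‖ := by rw [mul_one]

end Peirce

theorem peirce_two_eq_of_cebysev_general {A : Type*} [NonUnitalCStarAlgebra A]
    {F : Submodule ℝ A} (hF : IsChebyshevSet (F : Set A)) {e : A} (he : IsTripotent e)
    (hFe : MapsTo (peirceTwoProj e) F F)
    (hF0 : ∃ y ∈ F, y ≠ 0 ∧ e * star e * y = 0 ∧ y * star e * e = 0) :
    {x : A | e * star e * x = x ∧ x * star e * e = x} ⊆ (F : Set A) := by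
  rintro x ⟨hx₁, hx₂⟩
  obtain ⟨y, hyF, hy0, hy₁, hy₂⟩ := hF0
  have hx : IsFixedPt (peirceTwoProj e) x := isFixedPt_peirceTwoProj hx₁ hx₂
  obtain ⟨v, hvF, hv, hxv⟩ :=
    hF.exists_isFixedPt_dist_eq_infDist he.lipschitzWith_peirceTwoProj hFe hx
  have hu : IsFixedPt (peirceTwoProj e) (x - v) := by
    rw [IsFixedPt, map_sub, hx.eq, hv.eq]
  have huy : TripleOrthogonal (x - v) y :=
    tripleOrthogonal_of_isFixedPt_peirceTwoProj hu hy₁ hy₂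
  have hxv_eq : x = v := hF.eq_of_norm_sub_smul_le_max hvF hxv hyF hy0 fun c ↦
    (huy.smul_right c).norm_sub_eq_max.le
  exact hxv_eq ▸ hvF

/-- Let `A` be a C*-algebra, `F` a JB*-subtriple of `A` which is a
Chebyshev subspace of `A`, and `e` a nonzero tripotent (partial isometry) in `F`.
If `F₀(e) ≠ {0}`, then `A₂(e) ⊆ F` (so `A₂(e) = F₂(e)`). -/
theorem peirce_two_eq_of_cebysev
    {A : Type*} [NonUnitalNormedRing A] [StarRing A] [CStarRing A]
    [NormedSpace ℂ A] [IsScalarTower ℂ A A] [SMulCommClass ℂ A A]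
    [StarModule ℂ A] [CompleteSpace A]
    (F : Submodule ℂ A) (hFclosed : IsClosed (F : Set A))
    (hFtriple : ∀ x ∈ F, ∀ y ∈ F, ∀ z ∈ F,
      (2 : ℂ)⁻¹ • (x * star y * z + z * star y * x) ∈ F)
    (hCheb : ∀ x : A, ∃! v : A, v ∈ F ∧ ‖x - v‖ = Metric.infDist x (F : Set A))
    (e : A) (he : e ∈ F) (he0 : e ≠ 0) (htrip : e * star e * e = e)
    (hF0 : ∃ y ∈ F, y ≠ 0 ∧ e * star e * y = 0 ∧ y * star e * e = 0) :
    {x : A | e * star e * x = x ∧ x * star e * e = x} ⊆ (F : Set A) := by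
  let _ : NonUnitalCStarAlgebra A := { }
  have hF : IsChebyshevSet (F.restrictScalars ℝ : Set A) := by
    simpa [IsChebyshevSet, dist_eq_norm] using hCheb
  have hFe : MapsTo (fun z ↦ e * star z * e) (F : Set A) F := fun z hz ↦ by
    simpa [← two_smul ℂ] using hFtriple e he z hz e he
  exact peirce_two_eq_of_cebysev_general hF htrip (mapsTo_peirceTwoProj hFe) hF0
end

section
/- Let A be a C*-algebra and let a ∈ A. Then the smallest norm-closed subtriple of A containing a equals the smallest norm-closed subtriple of A containing a a* a, where a subtriple is a complex-linear subspace closed under the triple product {x,y,z} = (x y* z + z y* x)/2. -/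
/-- A norm-closed subtriple of a C*-algebra `A`: a norm-closed complex-linear
subspace closed under the triple product `{x,y,z} = (x y* z + z y* x)/2`. -/
def IsClosedSubtriple {A : Type*} [NonUnitalNormedRing A] [StarRing A]
    [NormedSpace ℂ A] (S : Set A) : Prop :=
  IsClosed S ∧ (∃ p : Submodule ℂ A, (p : Set A) = S) ∧
    ∀ x ∈ S, ∀ y ∈ S, ∀ z ∈ S, (2 : ℂ)⁻¹ • (x * star y * z + z * star y * x) ∈ S

/-!
Put `h = a* a` and `b = a a* a = a h`, so that `b* b = h³` and `b b* z = z b* b` for every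
`z = b f(b* b)`. For such `z` the triple product `{z, b, b}` collapses to `z b* b`, so a closed
subtriple containing `b` contains `b x` for every `x` in the closed algebra generated by `h³`. As
`h` is the cube root of `h³`, that algebra contains `h` and thus every `h (h² + δ²)⁻¹`. Finally
`b h (h² + δ²)⁻¹ = a h² (h² + δ²)⁻¹` tends to `a` as `δ → 0`.
-/

open scoped NNReal

section RightStabilizer

variable {R A : Type*} [CommSemiring R] [StarRing R] [NonUnitalSemiring A] [StarRing A]
  [Module R A] [SMulCommClass R A A] [StarModule R A]

/-- The elements `x` for which right multiplication by `x` and by `star x` both preserve the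
subspace `p`. Requiring both makes this a star subalgebra. -/
def rightStabilizer (p : Submodule R A) : NonUnitalStarSubalgebra R A where
  carrier := {x | ∀ z ∈ p, z * x ∈ p ∧ z * star x ∈ p}
  zero_mem' z _ := by simp
  add_mem' hx hy z hz := by
    simpa only [star_add, mul_add] using
      ⟨p.add_mem (hx z hz).1 (hy z hz).1, p.add_mem (hx z hz).2 (hy z hz).2⟩
  mul_mem' hx hy z hz := by
    simpa only [star_mul, ← mul_assoc] using
      ⟨(hy _ (hx z hz).1).1, (hx _ (hy z hz).2).2⟩
  smul_mem' r x hx z hz := by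
    simpa only [star_smul, mul_smul_comm] using
      ⟨p.smul_mem r (hx z hz).1, p.smul_mem (star r) (hx z hz).2⟩
  star_mem' hx z hz := by simpa only [star_star] using (hx z hz).symm

lemma mem_rightStabilizer {p : Submodule R A} {x : A} :
    x ∈ rightStabilizer p ↔ ∀ z ∈ p, z * x ∈ p ∧ z * star x ∈ p :=
  Iff.rfl

lemma mem_rightStabilizer_iff_of_isSelfAdjoint {p : Submodule R A} {x : A} (hx : IsSelfAdjoint x) :
    x ∈ rightStabilizer p ↔ ∀ z ∈ p, z * x ∈ p := by
  simp [mem_rightStabilizer, hx.star_eq]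

lemma isClosed_rightStabilizer [TopologicalSpace A] [ContinuousMul A] [ContinuousStar A]
    {p : Submodule R A} (hp : IsClosed (p : Set A)) :
    IsClosed (rightStabilizer p : Set A) := by
  have : (rightStabilizer p : Set A) = ⋂ z ∈ p, {x | z * x ∈ p} ∩ {x | z * star x ∈ p} := by
    ext x
    simp [mem_rightStabilizer]
  rw [this]
  exact isClosed_biInter fun z _ ↦
    (hp.preimage (continuous_const_mul z)).inter
      (hp.preimage ((continuous_const_mul z).comp continuous_star))

end RightStabilizer

section FunctionalCalculus

variable {A : Type*} [NonUnitalRing A] [StarRing A] [TopologicalSpace A] [Module ℝ A]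
  [IsScalarTower ℝ A A] [SMulCommClass ℝ A A]
  [NonUnitalContinuousFunctionalCalculus ℝ A IsSelfAdjoint]

lemma star_mul_self_sub_mul_cfcₙ (a : A) {f : ℝ → ℝ}
    (hf : ContinuousOn f (quasispectrum ℝ (star a * a))) (hf₀ : f 0 = 0) :
    star (a - a * cfcₙ f (star a * a)) * (a - a * cfcₙ f (star a * a)) =
      cfcₙ (fun t ↦ t * (1 - f t) ^ 2) (star a * a) := by
  set h := star a * a with h_def
  set k := cfcₙ f h
  have star_k : star k = k := (cfcₙ_predicate f h : IsSelfAdjoint k)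
  have hk : h * k = cfcₙ (fun t ↦ t * f t) h := by
    rw [cfcₙ_mul _ _ h, cfcₙ_id' ℝ h]
  have kh : k * h = cfcₙ (fun t ↦ f t * t) h := by
    rw [cfcₙ_mul _ _ h, cfcₙ_id' ℝ h]
  have khk : k * (h * k) = cfcₙ (fun t ↦ f t * (t * f t)) h := by
    rw [hk, cfcₙ_mul f _ h]
  calc star (a - a * k) * (a - a * k)
      = h - h * k - (k * h - k * (h * k)) := by
        simp only [h_def, star_sub, star_mul, star_k, mul_assoc, sub_mul, mul_sub]
        abel
    _ = cfcₙ (fun t ↦ t - t * f t - (f t * t - f t * (t * f t))) h := by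
        rw [khk, hk, kh, cfcₙ_sub _ _ h, cfcₙ_sub _ _ h, cfcₙ_sub _ _ h, cfcₙ_id' ℝ h]
    _ = cfcₙ (fun t ↦ t * (1 - f t) ^ 2) h := by
        congr 1
        ext t
        ring

lemma mem_elemental_mul_mul_self [IsTopologicalRing A] [T2Space A] [StarModule ℝ A]
    [ContinuousStar A] [ContinuousConstSMul ℝ A] [PartialOrder A] [NonnegSpectrumClass ℝ A]
    [StarOrderedRing A] {a : A} (ha : 0 ≤ a) :
    a ∈ NonUnitalStarAlgebra.elemental ℝ (a * a * a) := by
  have cube_nonneg : 0 ≤ a * a * a := by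
    rw [← CFC.nnrpow_three a]
    exact CFC.nnrpow_nonneg
  have cbrt_cube : (a * a * a) ^ (3⁻¹ : ℝ≥0) = a := by
    rw [← CFC.nnrpow_three a, CFC.nnrpow_nnrpow_inv a three_ne_zero]
  exact (range_cfcₙ_nnreal_subset (a * a * a) cube_nonneg ⟨_, cbrt_cube⟩).1

end FunctionalCalculus

lemma mul_one_sub_mul_div_sq_le (t : ℝ) {δ : ℝ} (hδ : 0 < δ) :
    t * (1 - t * (t / (t ^ 2 + δ ^ 2))) ^ 2 ≤ δ := by
  have pos : 0 < t ^ 2 + δ ^ 2 := by positivity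
  have eq : t * (1 - t * (t / (t ^ 2 + δ ^ 2))) ^ 2 = t * δ ^ 4 / (t ^ 2 + δ ^ 2) ^ 2 := by
    field_simp
    ring
  rw [eq, div_le_iff₀ (by positivity)]
  have amgm : t * δ ≤ t ^ 2 + δ ^ 2 := by nlinarith [sq_nonneg (t - δ)]
  calc t * δ ^ 4 = δ * (t * δ * δ ^ 2) := by ring
    _ ≤ δ * ((t ^ 2 + δ ^ 2) * (t ^ 2 + δ ^ 2)) := by
      gcongr
      exact le_add_of_nonneg_left (sq_nonneg t)
    _ = δ * (t ^ 2 + δ ^ 2) ^ 2 := by ring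

section CStarAlgebra

variable {A : Type*} [NonUnitalCStarAlgebra A]

lemma quasispectrum_star_mul_self_nonneg (a : A) {t : ℝ}
    (ht : t ∈ quasispectrum ℝ (star a * a)) : 0 ≤ t := by
  let _ := CStarAlgebra.spectralOrder A
  have := CStarAlgebra.spectralOrderedRing A
  exact quasispectrum_nonneg_of_nonneg _ (star_mul_self_nonneg a) t ht

lemma mem_closure_image_mul_elemental (a : A) :
    a ∈ closure ((a * star a * a * ·) '' NonUnitalStarAlgebra.elemental ℝ (star a * a)) := by
  set h := star a * a with h_def
  rw [Metric.mem_closure_iff]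
  intro ε hε
  obtain ⟨δ, hδ, δ_lt⟩ : ∃ δ, 0 < δ ∧ δ < ε ^ 2 := exists_between (by positivity)
  have den_ne (t : ℝ) : t ^ 2 + δ ^ 2 ≠ 0 := by positivity
  have cont : Continuous fun t : ℝ ↦ t / (t ^ 2 + δ ^ 2) :=
    continuous_id.div (by fun_prop) den_ne
  refine ⟨_, Set.mem_image_of_mem _ (cfcₙ_mem_elemental (fun t ↦ t / (t ^ 2 + δ ^ 2)) h), ?_⟩
  have cube_mul : a * star a * a * cfcₙ (fun t : ℝ ↦ t / (t ^ 2 + δ ^ 2)) h =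
      a * cfcₙ (fun t : ℝ ↦ t * (t / (t ^ 2 + δ ^ 2))) h := by
    rw [cfcₙ_mul (fun t ↦ t) _ h continuousOn_id rfl cont.continuousOn (by simp), cfcₙ_id' ℝ h]
    simp only [h_def, mul_assoc]
  rw [cube_mul, dist_eq_norm]
  refine lt_of_pow_lt_pow_left₀ 2 hε.le (lt_of_le_of_lt ?_ δ_lt)
  rw [sq, ← CStarRing.norm_star_mul_self,
    star_mul_self_sub_mul_cfcₙ a (by fun_prop) (by simp)]
  refine norm_cfcₙ_le fun t ht ↦ ?_
  have ht₀ := quasispectrum_star_mul_self_nonneg a ht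
  rw [Real.norm_of_nonneg (by positivity)]
  exact mul_one_sub_mul_div_sq_le t hδ

end CStarAlgebra

namespace IsClosedSubtriple

section

variable {A : Type*} [NonUnitalNormedRing A] [StarRing A] [NormedSpace ℂ A] {S : Set A}

lemma mul_star_mul_mem (hS : IsClosedSubtriple S) {x y z : A} (hx : x ∈ S) (hy : y ∈ S)
    (hz : z ∈ S) (hcomm : x * star y * z = z * star y * x) : x * star y * z ∈ S := by
  simpa [← hcomm, ← two_smul ℂ, smul_smul] using hS.2.2 x hx y hy z hz

end

section

variable {A : Type*} [NonUnitalCStarAlgebra A] {S : Set A}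

lemma mul_mem_of_mem_elemental (hS : IsClosedSubtriple S) {b x : A} (hb : b ∈ S)
    (hx : x ∈ NonUnitalStarAlgebra.elemental ℝ (star b * b)) : b * x ∈ S := by
  obtain ⟨p, rfl⟩ := hS.2.1
  let q : Submodule ℝ A := p.restrictScalars ℝ ⊓
    LinearMap.eqLocus (LinearMap.mulRight ℝ (star b * b)) (LinearMap.mulLeft ℝ (b * star b))
  have mem_q {z : A} : z ∈ q ↔ z ∈ p ∧ z * (star b * b) = b * star b * z := Iff.rfl
  have q_closed : IsClosed (q : Set A) :=
    hS.1.inter (isClosed_eq (continuous_mul_const _) (continuous_const_mul _))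
  have gen_mem : star b * b ∈ rightStabilizer q := by
    refine (mem_rightStabilizer_iff_of_isSelfAdjoint (.star_mul_self b)).2 fun z hz ↦ ?_
    obtain ⟨hzp, hzcomm⟩ := mem_q.1 hz
    refine mem_q.2 ⟨?_, ?_⟩
    · rw [← mul_assoc] at hzcomm ⊢
      exact hS.mul_star_mul_mem hzp hb hb hzcomm
    · rw [hzcomm, mul_assoc, hzcomm]
  have b_mem : b ∈ q := mem_q.2 ⟨hb, (mul_assoc b (star b) b).symm⟩
  have x_mem := NonUnitalStarAlgebra.elemental.le_of_mem (isClosed_rightStabilizer q_closed)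
    gen_mem hx
  exact (mem_q.1 (mem_rightStabilizer.1 x_mem b b_mem).1).1

lemma mem_of_mul_star_mul_self_mem (hS : IsClosedSubtriple S) {a : A}
    (hb : a * star a * a ∈ S) : a ∈ S := by
  let _ := CStarAlgebra.spectralOrder A
  have := CStarAlgebra.spectralOrderedRing A
  have star_b_mul_b : star (a * star a * a) * (a * star a * a) =
      star a * a * (star a * a) * (star a * a) := by
    simp only [star_mul, star_star, mul_assoc]
  have elemental_le : NonUnitalStarAlgebra.elemental ℝ (star a * a) ≤
      NonUnitalStarAlgebra.elemental ℝ (star (a * star a * a) * (a * star a * a)) := by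
    rw [star_b_mul_b]
    exact NonUnitalStarAlgebra.elemental.le_of_mem (NonUnitalStarAlgebra.elemental.isClosed ℝ _)
      (mem_elemental_mul_mul_self (star_mul_self_nonneg a))
  refine closure_minimal ?_ hS.1 (mem_closure_image_mul_elemental a)
  rintro _ ⟨x, hx, rfl⟩
  exact hS.mul_mem_of_mem_elemental hb (elemental_le hx)

lemma mem_iff_mul_star_mul_self_mem (hS : IsClosedSubtriple S) {a : A} :
    a ∈ S ↔ a * star a * a ∈ S :=
  ⟨fun ha ↦ hS.mul_star_mul_mem ha ha ha rfl, hS.mem_of_mul_star_mul_self_mem⟩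

end

end IsClosedSubtriple

/-- Let `A` be a C*-algebra and `a ∈ A`. Then the smallest norm-closed
subtriple of `A` containing `a` equals the smallest norm-closed subtriple of `A`
containing `a a* a`. -/
theorem subtriple_generated_by_cube_eq
    {A : Type*} [NonUnitalNormedRing A] [StarRing A] [CStarRing A]
    [NormedSpace ℂ A] [IsScalarTower ℂ A A] [SMulCommClass ℂ A A]
    [StarModule ℂ A] [CompleteSpace A]
    (a : A) :
    ⋂₀ {S : Set A | IsClosedSubtriple S ∧ a ∈ S} =
      ⋂₀ {S : Set A | IsClosedSubtriple S ∧ a * star a * a ∈ S} := by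
  let _ : NonUnitalCStarAlgebra A := {}
  congr 1
  ext S
  exact and_congr_right fun hS ↦ hS.mem_iff_mul_star_mul_self_mem
end

section
/- If A is a nonzero C*-algebra without a multiplicative unit, then A has infinite rank: for every natural number n there exist nonzero elements a₁, …, aₙ ∈ A which are mutually orthogonal (aᵢ aⱼ* = 0 and aⱼ* aᵢ = 0 for all i ≠ j). -/
/-!
If some self-adjoint element has infinite spectrum, then the spectrum contains infinitely many
disjoint open sets, and the functional calculus turns functions supported in them into an
orthogonal sequence.

Otherwise every self-adjoint `h` has finite spectrum, so `h` has a support projection `e`, with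
`h * e = h`. In the absence of a unit `c = b - e * b ≠ 0` for some `b`, and `h * c = 0`.
Applying this to a sum `h` of elements `star a * a` produces a nonzero element orthogonal to any
given finite set, hence an orthogonal sequence.
-/

open Function Set
open scoped ContinuousMapZero NonUnitalContinuousFunctionalCalculus

/-- Orthogonality of two elements of a C⋆-algebra (more generally, of a ring with involution):
`a b* = 0` and `b* a = 0`. -/
def StarOrthogonal {A : Type*} [Mul A] [Zero A] [Star A] (a b : A) : Prop :=
  a * star b = 0 ∧ star b * a = 0

namespace StarOrthogonal

theorem symm {A : Type*} [NonUnitalNonAssocSemiring A] [StarRing A] {a b : A}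
    (h : StarOrthogonal a b) : StarOrthogonal b a := by
  constructor
  · simpa only [star_mul, star_star, star_zero] using congrArg star h.1
  · simpa only [star_mul, star_star, star_zero] using congrArg star h.2

theorem map {A B F : Type*} [MulZeroClass A] [Star A] [MulZeroClass B] [Star B] [FunLike F A B]
    [MulHomClass F A B] [ZeroHomClass F A B] [StarHomClass F A B] (φ : F) {a b : A}
    (h : StarOrthogonal a b) : StarOrthogonal (φ a) (φ b) := by
  constructor
  · rw [← map_star, ← map_mul, h.1, map_zero]
  · rw [← map_star, ← map_mul, h.2, map_zero]

end StarOrthogonal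

section InfiniteSpectrum

theorem exists_continuousMapZero_ne_zero_eqOn_compl {X : Type*} [TopologicalSpace X]
    [Zero X] [T35Space X] {U : Set X} (hU : IsOpen U) {x : X} (hxU : x ∈ U) (hx : x ≠ 0) :
    ∃ f : C(X, ℝ)₀, f ≠ 0 ∧ EqOn f 0 Uᶜ := by
  obtain ⟨g, hg, hgx, hg_one⟩ := CompletelyRegularSpace.completely_regular_isOpen x (U \ {0})
    (hU.sdiff isClosed_singleton) ⟨hxU, hx⟩
  let f : C(X, ℝ)₀ :=
    { toFun := fun y ↦ 1 - g y
      map_zero' := by simp [hg_one (x := 0) (by simp)] }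
  refine ⟨f, fun hf ↦ ?_, fun y hy ↦ ?_⟩
  · simpa [f, hgx] using DFunLike.congr_fun hf x
  · simp [f, hg_one (x := y) fun h ↦ hy h.1]

theorem exists_seq_continuousMapZero_starOrthogonal (X : Type*) [TopologicalSpace X] [Zero X]
    [T35Space X] [Infinite X] :
    ∃ f : ℕ → C(X, ℝ)₀, (∀ n, f n ≠ 0) ∧ Pairwise (StarOrthogonal on f) := by
  obtain ⟨U, hU_infinite, hU_open, hU_disjoint⟩ := exists_seq_infinite_isOpen_pairwise_disjoint X
  have exists_bump (n : ℕ) : ∃ f : C(X, ℝ)₀, f ≠ 0 ∧ EqOn f 0 (U n)ᶜ := by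
    obtain ⟨x, hxU, hx⟩ := (hU_infinite n).nontrivial.exists_ne 0
    exact exists_continuousMapZero_ne_zero_eqOn_compl (hU_open n) hxU hx
  choose f hf_ne hf_zero using exists_bump
  have mul_eq_zero {m n : ℕ} (hmn : m ≠ n) : f m * f n = 0 := by
    ext x
    by_cases hx : x ∈ U m
    · have hxn : x ∈ (U n)ᶜ := disjoint_left.mp (hU_disjoint hmn) hx
      simp [hf_zero n hxn]
    · simp [hf_zero m hx]
  refine ⟨f, hf_ne, fun m n hmn ↦ ?_⟩
  simp only [onFun, StarOrthogonal, star_trivial]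
  exact ⟨mul_eq_zero hmn, mul_eq_zero hmn.symm⟩

theorem exists_seq_starOrthogonal_of_infinite_quasispectrum {A : Type*} {p : A → Prop}
    [NonUnitalRing A] [StarRing A] [TopologicalSpace A] [Module ℝ A] [IsScalarTower ℝ A A]
    [SMulCommClass ℝ A A] [NonUnitalContinuousFunctionalCalculus ℝ A p] {a : A} (ha : p a)
    (h_inf : (quasispectrum ℝ a).Infinite) :
    ∃ f : ℕ → A, (∀ n, f n ≠ 0) ∧ Pairwise (StarOrthogonal on f) := by
  have : Infinite (quasispectrum ℝ a) := h_inf.to_subtype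
  obtain ⟨f, hf_ne, hf⟩ := exists_seq_continuousMapZero_starOrthogonal (quasispectrum ℝ a)
  exact ⟨fun n ↦ cfcₙHom ha (f n),
    fun n ↦ (map_ne_zero_iff (cfcₙHom ha) (cfcₙHom_injective ha)).mpr (hf_ne n),
    fun _ _ hmn ↦ (hf hmn).map (cfcₙHom ha)⟩

end InfiniteSpectrum

section FiniteSpectrum

theorem exists_isSelfAdjoint_mul_eq_self_of_finite_quasispectrum {A : Type*} [NonUnitalRing A]
    [StarRing A] [TopologicalSpace A] [Module ℝ A] [IsScalarTower ℝ A A] [SMulCommClass ℝ A A]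
    [NonUnitalContinuousFunctionalCalculus ℝ A IsSelfAdjoint] {a : A} (ha : IsSelfAdjoint a)
    (h_fin : (quasispectrum ℝ a).Finite) :
    ∃ e : A, IsSelfAdjoint e ∧ a * e = a := by
  -- `s * s⁻¹` is the indicator function of `{0}ᶜ`, because `0⁻¹ = 0`.
  refine ⟨cfcₙ (fun s : ℝ ↦ s * s⁻¹) a, cfcₙ_predicate _ a, ?_⟩
  calc
    a * cfcₙ (fun s : ℝ ↦ s * s⁻¹) a
        = cfcₙ (fun s : ℝ ↦ s) a * cfcₙ (fun s : ℝ ↦ s * s⁻¹) a := by rw [cfcₙ_id' ℝ a]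
    _ = cfcₙ (fun s : ℝ ↦ s * (s * s⁻¹)) a :=
      (cfcₙ_mul (fun s : ℝ ↦ s) (fun s ↦ s * s⁻¹) a (h_fin.continuousOn _) rfl
        (h_fin.continuousOn _) (zero_mul _)).symm
    _ = cfcₙ (fun s : ℝ ↦ s) a := by simp only [← mul_assoc, mul_self_mul_inv]
    _ = a := cfcₙ_id' ℝ a

theorem mul_eq_self_of_isSelfAdjoint_of_forall_mul_eq_self {A : Type*} [Mul A] [StarMul A] {e : A}
    (he : IsSelfAdjoint e) (h : ∀ b, e * b = b) (b : A) : b * e = b := by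
  simpa only [star_mul, star_star, he.star_eq] using congrArg star (h (star b))

theorem exists_ne_zero_mul_eq_zero_of_finite_quasispectrum {A : Type*} [NonUnitalRing A]
    [StarRing A] [TopologicalSpace A] [Module ℝ A] [IsScalarTower ℝ A A] [SMulCommClass ℝ A A]
    [NonUnitalContinuousFunctionalCalculus ℝ A IsSelfAdjoint]
    (h_nounit : ¬ ∃ e : A, ∀ b : A, e * b = b ∧ b * e = b) {a : A} (ha : IsSelfAdjoint a)
    (h_fin : (quasispectrum ℝ a).Finite) :
    ∃ c : A, c ≠ 0 ∧ a * c = 0 := by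
  obtain ⟨e, he, hae⟩ := exists_isSelfAdjoint_mul_eq_self_of_finite_quasispectrum ha h_fin
  obtain ⟨b, hb⟩ : ∃ b, e * b ≠ b := by
    by_contra! h
    exact h_nounit ⟨e, fun b ↦ ⟨h b, mul_eq_self_of_isSelfAdjoint_of_forall_mul_eq_self he h b⟩⟩
  exact ⟨b - e * b, sub_ne_zero.mpr hb.symm, by rw [mul_sub, ← mul_assoc, hae, sub_self]⟩

variable {A : Type*} [NonUnitalCStarAlgebra A]

theorem mul_eq_zero_of_sum_star_mul_self_mul_eq_zero {ι : Type*} {s : Finset ι} {f : ι → A} {c : A}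
    (h : (∑ i ∈ s, star (f i) * f i) * c = 0) {i : ι} (hi : i ∈ s) : f i * c = 0 := by
  let _ := CStarAlgebra.spectralOrder A
  have := CStarAlgebra.spectralOrderedRing A
  have sum_eq_zero : ∑ i ∈ s, star (f i * c) * (f i * c) = 0 := calc
    ∑ i ∈ s, star (f i * c) * (f i * c) = star c * ((∑ i ∈ s, star (f i) * f i) * c) := by
      simp only [Finset.sum_mul, Finset.mul_sum, star_mul, mul_assoc]
    _ = 0 := by rw [h, mul_zero]
  rw [← CStarRing.star_mul_self_eq_zero_iff]
  exact (Finset.sum_eq_zero_iff_of_nonneg fun i _ ↦ star_mul_self_nonneg (f i * c)).mp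
    sum_eq_zero i hi

theorem exists_ne_zero_forall_mem_finset_starOrthogonal
    (h_nounit : ¬ ∃ e : A, ∀ b : A, e * b = b ∧ b * e = b)
    (h_fin : ∀ a : A, IsSelfAdjoint a → (quasispectrum ℝ a).Finite) (s : Finset A) :
    ∃ y : A, y ≠ 0 ∧ ∀ a ∈ s, StarOrthogonal a y := by
  classical
  let t := s ∪ s.image star
  have ht : IsSelfAdjoint (∑ a ∈ t, star a * a) :=
    isSelfAdjoint_sum t fun a _ ↦ IsSelfAdjoint.star_mul_self a
  obtain ⟨c, hc, htc⟩ :=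
    exists_ne_zero_mul_eq_zero_of_finite_quasispectrum h_nounit ht (h_fin _ ht)
  have annihilates {a : A} (ha : a ∈ t) : a * c = 0 :=
    mul_eq_zero_of_sum_star_mul_self_mul_eq_zero (f := id) htc ha
  refine ⟨c * star c, (CStarRing.mul_star_self_ne_zero_iff c).mpr hc, fun a ha ↦ ?_⟩
  have hac : a * c = 0 := annihilates (Finset.mem_union_left _ ha)
  have hca : star c * a = 0 := by
    simpa only [star_mul, star_star, star_zero] using
      congrArg star (annihilates (Finset.mem_union_right s (Finset.mem_image_of_mem star ha)))
  rw [StarOrthogonal, (IsSelfAdjoint.mul_star_self c).star_eq]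
  exact ⟨by rw [← mul_assoc, hac, zero_mul], by rw [mul_assoc, hca, mul_zero]⟩

end FiniteSpectrum

theorem nonunital_CStarAlgebra_infinite_rank_general {A : Type*} [NonUnitalCStarAlgebra A]
    (h_nounit : ¬ ∃ e : A, ∀ b : A, e * b = b ∧ b * e = b) :
    ∃ f : ℕ → A, (∀ n, f n ≠ 0) ∧ Pairwise (StarOrthogonal on f) := by
  by_cases h_fin : ∀ a : A, IsSelfAdjoint a → (quasispectrum ℝ a).Finite
  · have : Std.Symm (StarOrthogonal (A := A)) := ⟨fun _ _ ↦ StarOrthogonal.symm⟩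
    exact exists_seq_of_forall_finset_exists' (· ≠ 0) StarOrthogonal fun s _ ↦
      exists_ne_zero_forall_mem_finset_starOrthogonal h_nounit h_fin s
  · push Not at h_fin
    obtain ⟨a, ha, h_inf⟩ := h_fin
    exact exists_seq_starOrthogonal_of_infinite_quasispectrum ha h_inf

/-- If `A` is a nonzero C*-algebra without a multiplicative unit,
then `A` has infinite rank: for every `n` there exist `n` nonzero mutually
orthogonal elements of `A`. -/
theorem nonunital_CStarAlgebra_infinite_rank
    {A : Type*} [NonUnitalNormedRing A] [StarRing A] [CStarRing A]
    [NormedSpace ℂ A] [IsScalarTower ℂ A A] [SMulCommClass ℂ A A]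
    [StarModule ℂ A] [CompleteSpace A]
    (hA0 : ∃ x : A, x ≠ 0)
    (hnounit : ¬ ∃ e : A, ∀ b : A, e * b = b ∧ b * e = b) :
    ∀ n : ℕ, ∃ f : Fin n → A, (∀ i, f i ≠ 0) ∧
      ∀ i j, i ≠ j → f i * star (f j) = 0 ∧ star (f j) * f i = 0 := by
  intro n
  let _ : NonUnitalCStarAlgebra A := {}
  obtain ⟨f, hf_ne, hf⟩ := nonunital_CStarAlgebra_infinite_rank_general hnounit
  exact ⟨fun i ↦ f i, fun i ↦ hf_ne i, fun i j hij ↦ hf (Fin.val_ne_of_ne hij)⟩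
end

section
/- Let A be a C*-algebra and let e be an extreme point of the closed unit ball of A. Then e is Brown–Pedersen quasi-invertible in A; indeed B(e,e) = 0, i.e., z − e e* z − z e* e + e e* z e* e = 0 for every z ∈ A. -/
/-!
If `e` is extreme in a set containing `e + y` and `e - y`, then `y = 0`; two perturbations exploit
this. First, `y = (1/2)(e - e e* e)` is admissible: writing `e ± y = e f(e* e)` with
`f t = 1 ± (1 - t) / 2`, the C*-identity reduces `‖e ± y‖ ≤ 1` to `t f(t)² ≤ 1` on `[0, 1]`. Hence
`e e* e = e`, which makes every `B(e, e)(z)` orthogonal to `e`. Second, any `y` orthogonal to `e`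
with `‖y‖ ≤ 1` is admissible, because `‖e ± y‖ = max ‖e‖ ‖y‖`; so only `0` is orthogonal to `e`.
-/

section ExtremePoints

variable {𝕜 E : Type*} [Ring 𝕜] [LinearOrder 𝕜] [IsStrictOrderedRing 𝕜]
  [Invertible (2 : 𝕜)] [AddCommGroup E] [Module 𝕜 E]

theorem eq_zero_of_mem_extremePoints_of_add_mem_of_sub_mem {s : Set E} {x y : E}
    (hx : x ∈ s.extremePoints 𝕜) (hadd : x + y ∈ s) (hsub : x - y ∈ s) : y = 0 :=
  add_eq_left.1 <| hx.2 hadd hsub (mem_openSegment_add_sub x y)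

end ExtremePoints

section Bergmann

variable {A : Type*} [NonUnitalRing A] [StarRing A]

/-- The Bergmann operator `B(x, y)` of a star ring, applied to `z`: a bare function, not a linear
map. The element `x` is Brown–Pedersen quasi-invertible when `B(x, y)` vanishes for some `y`. -/
def bergmann (x y z : A) : A :=
  z - x * star y * z - z * star y * x + x * star y * z * star y * x

variable {e : A}

theorem star_mul_bergmann_self (he : e * star e * e = e) (z : A) :
    star e * bergmann e e z = 0 := by
  have he' : star e * e * star e = star e := by simpa [mul_assoc] using congr(star $he)
  have cancel (w : A) : star e * (e * (star e * w)) = star e * w := by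
    rw [← mul_assoc, ← mul_assoc, he']
  simp only [bergmann, mul_add, mul_sub, mul_assoc, cancel]
  abel

theorem bergmann_self_mul_star (he : e * star e * e = e) (z : A) :
    bergmann e e z * star e = 0 := by
  have he' : star e * (e * star e) = star e := by simpa [mul_assoc] using congr(star $he)
  simp only [bergmann, add_mul, sub_mul, mul_assoc, he']
  abel

end Bergmann

section Unital

variable {B : Type*} [CStarAlgebra B]

theorem norm_mul_cfc_star_mul_self_sq (a : B) (f : ℝ → ℝ)
    (hf : ContinuousOn f (spectrum ℝ (star a * a)) := by cfc_cont_tac) :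
    ‖a * cfc f (star a * a)‖ ^ 2 = ‖cfc (fun t ↦ t * f t ^ 2) (star a * a)‖ := by
  have hself : star (cfc f (star a * a)) = cfc f (star a * a) := cfc_predicate f (star a * a)
  have hmul : star (a * cfc f (star a * a)) * (a * cfc f (star a * a)) =
      cfc (fun t ↦ t * f t ^ 2) (star a * a) := calc
    _ = cfc f (star a * a) * (star a * a) * cfc f (star a * a) := by
      simp only [star_mul, hself, mul_assoc]
    _ = cfc (fun t ↦ f t * t * f t) (star a * a) := by
      rw [cfc_mul (fun t ↦ f t * t) f (star a * a), cfc_mul f (fun t ↦ t) (star a * a),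
        cfc_id' ℝ (star a * a)]
    _ = cfc (fun t ↦ t * f t ^ 2) (star a * a) := by congr! 2 with t; ring
  rw [sq, ← CStarRing.norm_star_mul_self, hmul]

theorem spectrum_star_mul_self_subset_Icc (a : B) :
    spectrum ℝ (star a * a) ⊆ Set.Icc 0 (‖a‖ ^ 2) := by
  intro t ht
  refine ⟨spectrum_star_mul_self_nonneg t ht, ?_⟩
  obtain _ | _ := subsingleton_or_nontrivial B
  · simp [spectrum.of_subsingleton] at ht
  calc t ≤ ‖t‖ := Real.le_norm_self t
    _ ≤ ‖star a * a‖ := spectrum.norm_le_norm_of_mem ht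
    _ = ‖a‖ ^ 2 := by rw [CStarRing.norm_star_mul_self, sq]

end Unital

theorem mul_one_add_mul_one_sub_sq_le_one {R : Type*} [Field R] [LinearOrder R]
    [IsStrictOrderedRing R] {c t : R} (hc : |c| ≤ 1 / 2) (ht : t ∈ Set.Icc 0 1) :
    t * (1 + c * (1 - t)) ^ 2 ≤ 1 := by
  obtain ⟨ht0, ht1⟩ := ht
  obtain ⟨hc1, hc2⟩ := abs_le.1 hc
  have hnonneg : 0 ≤ 1 + c * (1 - t) := by nlinarith
  calc t * (1 + c * (1 - t)) ^ 2 ≤ t * (1 + 1 / 2 * (1 - t)) ^ 2 := by gcongr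
    _ = 1 - (1 - t) ^ 2 * (4 - t) / 4 := by ring
    _ ≤ 1 := by
        have : 0 ≤ 4 - t := by linarith
        exact sub_le_self _ (by positivity)

section NonUnital

variable {A : Type*} [NonUnitalCStarAlgebra A]

open scoped CStarAlgebra in
open Unitization in
theorem norm_add_smul_sub_mul_star_mul_le_one {e : A} (he : ‖e‖ ≤ 1) {c : ℝ}
    (hc : |c| ≤ 1 / 2) : ‖e + c • (e - e * star e * e)‖ ≤ 1 := by
  have hcfc : cfc (fun t : ℝ ↦ 1 + c * (1 - t)) (star (e : A⁺¹) * e) =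
      1 + c • (1 - star (e : A⁺¹) * e) := by
    rw [cfc_const_add 1 (fun t ↦ c * (1 - t)) (star (e : A⁺¹) * e),
      cfc_const_mul c (fun t ↦ 1 - t) (star (e : A⁺¹) * e),
      cfc_sub (fun _ ↦ 1) (fun t ↦ t) (star (e : A⁺¹) * e), cfc_const_one ℝ (star (e : A⁺¹) * e),
      cfc_id' ℝ (star (e : A⁺¹) * e), map_one]
  have hmul : ((e + c • (e - e * star e * e) : A) : A⁺¹) =
      e * cfc (fun t : ℝ ↦ 1 + c * (1 - t)) (star (e : A⁺¹) * e) := by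
    rw [hcfc]
    simp [mul_add, mul_sub, mul_assoc]
  rw [← norm_inr (𝕜 := ℂ), hmul, ← sq_le_one_iff₀ (norm_nonneg _),
    norm_mul_cfc_star_mul_self_sq (e : A⁺¹) (fun t ↦ 1 + c * (1 - t))]
  refine norm_cfc_le zero_le_one fun t ht ↦ ?_
  obtain ⟨ht0, hte⟩ := spectrum_star_mul_self_subset_Icc _ ht
  have ht1 : t ≤ 1 := hte.trans (pow_le_one₀ (norm_nonneg _) (by rwa [norm_inr]))
  rw [Real.norm_of_nonneg (by positivity)]
  exact mul_one_add_mul_one_sub_sq_le_one hc ⟨ht0, ht1⟩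

theorem norm_add_eq_max_of_star_mul_eq_zero {a b : A} (hl : star a * b = 0)
    (hr : b * star a = 0) : ‖a + b‖ = max ‖a‖ ‖b‖ := by
  have hl' : star b * a = 0 := by simpa using congr(star $hl)
  have hr' : a * star b = 0 := by simpa using congr(star $hr)
  have hmul : star a * a * (star b * b) = 0 := by
    rw [mul_assoc, ← mul_assoc a, hr', zero_mul, mul_zero]
  rw [← sq_eq_sq₀ (norm_nonneg _) (by positivity)]
  calc ‖a + b‖ ^ 2 = ‖star a * a + star b * b‖ := by
        rw [sq, ← CStarRing.norm_star_mul_self]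
        simp only [star_add, mul_add, add_mul, hl, hl', add_zero, zero_add]
    _ = max ‖star a * a‖ ‖star b * b‖ :=
        (IsSelfAdjoint.star_mul_self a).norm_add_eq_max (.star_mul_self b) hmul
    _ = max ‖a‖ ‖b‖ ^ 2 := by
        simp only [CStarRing.norm_star_mul_self, ← sq]
        exact (pow_left_monotoneOn.map_max (norm_nonneg a) (norm_nonneg b)).symm

open Metric Set

variable {e : A}

theorem mul_star_mul_self_of_mem_extremePoints (he : e ∈ extremePoints ℝ (closedBall (0 : A) 1)) :
    e * star e * e = e := by
  have hnorm : ‖e‖ ≤ 1 := mem_closedBall_zero_iff.1 he.1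
  have hadd : e + (1 / 2 : ℝ) • (e - e * star e * e) ∈ closedBall (0 : A) 1 :=
    mem_closedBall_zero_iff.2 <| norm_add_smul_sub_mul_star_mul_le_one hnorm (by norm_num)
  have hsub : e - (1 / 2 : ℝ) • (e - e * star e * e) ∈ closedBall (0 : A) 1 := by
    rw [sub_eq_add_neg, ← neg_smul, mem_closedBall_zero_iff]
    exact norm_add_smul_sub_mul_star_mul_le_one hnorm (by norm_num)
  have hzero := eq_zero_of_mem_extremePoints_of_add_mem_of_sub_mem he hadd hsub
  exact (sub_eq_zero.1 <| (smul_eq_zero.1 hzero).resolve_left (by norm_num)).symm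

theorem eq_zero_of_mem_extremePoints_of_star_mul_eq_zero
    (he : e ∈ extremePoints ℝ (closedBall (0 : A) 1)) {z : A}
    (hl : star e * z = 0) (hr : z * star e = 0) : z = 0 := by
  have hnorm : ‖e‖ ≤ 1 := mem_closedBall_zero_iff.1 he.1
  have hmem {r : ℝ} (hrz : ‖r • z‖ ≤ 1) : e + r • z ∈ closedBall (0 : A) 1 := by
    rw [mem_closedBall_zero_iff, norm_add_eq_max_of_star_mul_eq_zero]
    · exact max_le hnorm hrz
    · rw [mul_smul_comm, hl, smul_zero]
    · rw [smul_mul_assoc, hr, smul_zero]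
  have hle : ‖‖z‖⁻¹ • z‖ ≤ 1 := by
    rw [norm_smul, norm_inv, norm_norm]
    exact inv_mul_le_one
  have hsub : e - ‖z‖⁻¹ • z ∈ closedBall (0 : A) 1 := by
    rw [sub_eq_add_neg, ← neg_smul]
    exact hmem (by rwa [neg_smul, norm_neg])
  simpa using eq_zero_of_mem_extremePoints_of_add_mem_of_sub_mem he (hmem hle) hsub

end NonUnital

/-- Let `A` be a C*-algebra and `e` an extreme point of the closed
unit ball of `A`. Then `e` is Brown–Pedersen quasi-invertible; indeed `B(e,e) = 0`:
`z - e e* z - z e* e + e e* z e* e = 0` for every `z ∈ A`. -/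
theorem extreme_point_is_BP_quasi_invertible
    {A : Type*} [NonUnitalNormedRing A] [StarRing A] [CStarRing A]
    [NormedSpace ℂ A] [IsScalarTower ℂ A A] [SMulCommClass ℂ A A]
    [StarModule ℂ A] [CompleteSpace A]
    (e : A) (he : e ∈ Set.extremePoints ℝ (Metric.closedBall (0 : A) 1)) :
    ∀ z : A, z - e * star e * z - z * star e * e + e * star e * z * star e * e = 0 := by
  let _ : NonUnitalCStarAlgebra A := {}
  intro z
  have hpartial : e * star e * e = e := mul_star_mul_self_of_mem_extremePoints he
  exact eq_zero_of_mem_extremePoints_of_star_mul_eq_zero he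
    (star_mul_bergmann_self hpartial z) (bergmann_self_mul_star hpartial z)
end
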